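/- Let q be a prime power, p a monic irreducible polynomial of degree k over F_q with companion matrix P, m ≥ 1 and n = mk, and let r ∈ {0,…,k−1}. Let U, V ∈ F_q^{k×n} be basis matrices of codewords of the Desarguesian spread S_q(m,k,P) (block form with blocks in F_q[P]). Let A, A' ∈ F_q^{k×k} be matrices of rank k − r, and let S ⊆ {1,…,n} be a set of column indices such that for every block j ∈ {1,…,m} at most k − r − 1 of the k columns of block j lie in S, and such that there exists a block j_0 with no column of block j_0 in S and with the j_0-th block of U nonzero (hence invertible). If AU and A'V agree in every column outside S, then rowsp(U) = rowsp(V). (That is, the Desarguesian spread can uniquely decode r row deletions together with any k−r−1 column erasures per block, provided one nonzero block is unaffected by column erasures.) -/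

import Mathlib

/-!
The companion matrix `P` is the matrix of multiplication by the root in `F[X]/(p)`, so `p` kills `P`
(`aeval_companionMatrix`), and since `p` is irreducible every nonzero matrix `f(P)` is invertible
with inverse again a polynomial in `P` (`exists_aeval_inverse`).

Write `U_j = u_j(P)` and `V_j = v_j(P)` for the blocks. On the erasure-free block `j₀`, the equation
`A U_{j₀} = A' V_{j₀}` holds exactly and forces `V_{j₀} ≠ 0`; put `W = V_{j₀} U_{j₀}⁻¹`, so that
`A = A' W`. In any block `j`, the matrix `A' (W U_j - V_j) = A U_j - A' V_j` vanishes off the at most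
`k - r - 1` erased columns, hence has rank less than `k - r = rank A'`. So `W U_j - V_j`, which is
a polynomial in `P`, is not invertible and must vanish. Therefore `V = W U` with `W` invertible, and
the row spaces agree.
-/

open Matrix Polynomial

noncomputable section

/-- The companion matrix of a (monic) polynomial `p` of degree `k`:
entries `P (j+1) j = 1` on the subdiagonal, last column `(-p₀, …, -p_{k-1})ᵀ`. -/
def companionMatrix {F : Type*} [Field F] {k : ℕ} (p : Polynomial F) :
    Matrix (Fin k) (Fin k) F :=
  Matrix.of fun i j =>
    if (j : ℕ) = k - 1 then -p.coeff (i : ℕ)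
    else if (i : ℕ) = (j : ℕ) + 1 then 1 else 0

/-- `F_q[P] = { Σ_{i<k} vᵢ Pⁱ : vᵢ ∈ F_q }`. -/
def matAlg {F : Type*} [Field F] {k : ℕ} (P : Matrix (Fin k) (Fin k) F) :
    Set (Matrix (Fin k) (Fin k) F) :=
  { A | ∃ v : Fin k → F, A = ∑ i : Fin k, v i • P ^ (i : ℕ) }

/-- The row space of a matrix: the span of its rows. -/
def rowSpace {F : Type*} [Field F] {ι n : Type*} (M : Matrix ι n F) :
    Submodule F (n → F) :=
  Submodule.span F (Set.range fun i => M i)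

/-- `U` is a (reduced row echelon form) basis matrix of a codeword of the
Desarguesian spread `S_q(m,k,P)`, i.e. `U = (0 | … | 0 | I_k | B_{i+1} | … | B_m)`
with all blocks `B_j ∈ F_q[P]`. -/
def IsSpreadMat {F : Type*} [Field F] {k m : ℕ} (P : Matrix (Fin k) (Fin k) F)
    (U : Matrix (Fin k) (Fin m × Fin k) F) : Prop :=
  ∃ i : Fin m, ∃ B : Fin m → Matrix (Fin k) (Fin k) F,
    (∀ j, j < i → B j = 0) ∧ B i = 1 ∧ (∀ j, i < j → B j ∈ matAlg P) ∧
    U = Matrix.of fun r jc => B jc.1 r jc.2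

/-- The Desarguesian spread `S_q(m,k,P)` as a set of subspaces of `F^{mk}`. -/
def desSpread {F : Type*} [Field F] {k m : ℕ} (P : Matrix (Fin k) (Fin k) F) :
    Set (Submodule F (Fin m × Fin k → F)) :=
  { W | ∃ U : Matrix (Fin k) (Fin m × Fin k) F, IsSpreadMat P U ∧ W = rowSpace U }

theorem aeval_companionMatrix {F : Type*} [Field F] {k : ℕ} {p : F[X]} (hmonic : p.Monic)
    (hdeg : p.natDegree = k) : aeval (companionMatrix (k := k) p) p = 0 := by
  subst hdeg
  let pb := AdjoinRoot.powerBasis' hmonic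
  have hmin : pb.minpolyGen = p := by
    rw [PowerBasis.minpolyGen_eq]
    refine (minpoly.unique F _ hmonic ?_ ?_).symm
    · simp [pb, AdjoinRoot.aeval_eq]
    · intro q hq h0
      have h0' : p ∣ q := by
        simpa [pb, AdjoinRoot.aeval_eq, AdjoinRoot.mk_eq_zero] using h0
      exact degree_le_of_dvd h0' hq.ne_zero
  have hP : (companionMatrix (k := p.natDegree) p) = Algebra.leftMulMatrix pb.basis pb.gen := by
    rw [PowerBasis.leftMulMatrix, hmin]
    ext i j
    have hj : (j : ℕ) < p.natDegree := j.2
    have : ((j : ℕ) = p.natDegree - 1) ↔ ((j : ℕ) + 1 = pb.dim) := by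
      change _ ↔ (j : ℕ) + 1 = p.natDegree
      omega
    simp only [companionMatrix, Matrix.of_apply, this]
    rfl
  rw [hP]
  -- `leftMulMatrix` is an algebra map, and `p` vanishes at the root.
  refine (aeval_algHom_apply (Algebra.leftMulMatrix pb.basis) pb.gen p).trans ?_
  have : aeval pb.gen p = 0 := by simp [pb, AdjoinRoot.aeval_eq]
  rw [this, map_zero]
  -- the two zeros live over `Fin pb.dim` and `Fin p.natDegree`, which agree by definition
  rfl

theorem exists_aeval_inverse {F R : Type*} [Field F] [Ring R] [Algebra F R] {p : F[X]}
    (hirr : Irreducible p) {P : R} (hP : aeval P p = 0) {f : F[X]} (hf : aeval P f ≠ 0) :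
    ∃ g : F[X], aeval P f * aeval P g = 1 ∧ aeval P g * aeval P f = 1 := by
  have hnd : ¬ p ∣ f := by
    rintro ⟨c, rfl⟩
    exact hf (by rw [map_mul, hP, zero_mul])
  obtain ⟨a, b, hab⟩ := (hirr.coprime_iff_not_dvd).2 hnd
  have h : aeval P (b * f) = 1 := by
    have := congrArg (aeval P) hab
    simpa [hP] using this
  exact ⟨b, by rw [← map_mul, mul_comm f b, h], by rw [← map_mul, h]⟩

theorem IsSpreadMat.exists_poly {F : Type*} [Field F] {k m : ℕ} {P : Matrix (Fin k) (Fin k) F}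
    {U : Matrix (Fin k) (Fin m × Fin k) F} (hU : IsSpreadMat P U) :
    ∃ u : Fin m → F[X], ∀ i j c, U i (j, c) = aeval P (u j) i c := by
  obtain ⟨i₀, B, hlt, heq, hgt, rfl⟩ := hU
  have h : ∀ j, ∃ f : F[X], B j = aeval P f := by
    intro j
    rcases lt_trichotomy j i₀ with h | rfl | h
    · exact ⟨0, by rw [hlt j h, map_zero]⟩
    · exact ⟨1, by rw [heq, map_one]⟩
    · obtain ⟨v, hv⟩ := hgt j h
      exact ⟨∑ i : Fin k, v i • X ^ (i : ℕ), by simp [hv]⟩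
  choose u hu using h
  exact ⟨u, fun i j c => by simp [hu]⟩

theorem rowSpace_mul_le {F : Type*} [Field F] {ι κ n : Type*} [Fintype κ] (W : Matrix ι κ F)
    (U : Matrix κ n F) : rowSpace (W * U) ≤ rowSpace U := by
  refine Submodule.span_le.2 ?_
  rintro _ ⟨i, rfl⟩
  have : (W * U) i = ∑ l, W i l • U l := by
    ext c
    simp [Matrix.mul_apply]
  simp only [this]
  exact Submodule.sum_mem _ fun l _ => Submodule.smul_mem _ _ (Submodule.subset_span ⟨l, rfl⟩)

/-- The rank of a matrix is at most the number of columns outside of which it vanishes. -/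
theorem rank_le_card_of_cols_zero {F : Type*} [Field F] {k : ℕ} (M : Matrix (Fin k) (Fin k) F)
    (s : Finset (Fin k)) (h : ∀ c ∉ s, ∀ i, M i c = 0) : M.rank ≤ s.card := by
  rw [← Matrix.rank_transpose]
  refine Matrix.rank_le_card_of_support_subset _ s ?_
  rw [Function.support_subset_iff']
  intro c hc
  ext i
  exact h c (by simpa using hc) i

/-- In the column erasure channel with deletions, the
Desarguesian spread `S_q(m,k,P)` uniquely decodes `r` row deletions together
with any `k-r-1` column erasures per `k×k` block, provided some nonzero block of
the sent codeword matrix `U` is unaffected by column erasures: if `A, A'` have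
rank `k-r` and `A·U`, `A'·V` agree in every column outside `S`, then
`rowsp(U) = rowsp(V)`. -/
theorem desSpread_CEC_deletion_blockwise_correction (F : Type*) [Field F]
    (k m r : ℕ) (hm : 1 ≤ m) (hr : r < k)
    (p : Polynomial F) (hmonic : p.Monic) (hirr : Irreducible p)
    (hdeg : p.natDegree = k)
    (U V : Matrix (Fin k) (Fin m × Fin k) F)
    (hU : IsSpreadMat (companionMatrix (k := k) p) U)
    (hV : IsSpreadMat (companionMatrix (k := k) p) V)
    (A A' : Matrix (Fin k) (Fin k) F) (hA : A.rank = k - r) (hA' : A'.rank = k - r)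
    (S : Finset (Fin m × Fin k))
    (hSblocks : ∀ j : Fin m, (S.filter fun col => col.1 = j).card ≤ k - r - 1)
    (hfree : ∃ j₀ : Fin m, (∀ c : Fin k, (j₀, c) ∉ S) ∧ ∃ r' c : Fin k, U r' (j₀, c) ≠ 0)
    (hagree : ∀ col ∉ S, ∀ row : Fin k, (A * U) row col = (A' * V) row col) :
    rowSpace U = rowSpace V := by
  set P := companionMatrix (k := k) p
  have hP : aeval P p = 0 := aeval_companionMatrix hmonic hdeg
  obtain ⟨u, hu⟩ := hU.exists_poly
  obtain ⟨v, hv⟩ := hV.exists_poly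
  obtain ⟨j₀, hj₀, r', c', hne⟩ := hfree
  have hblock : ∀ j c, (j, c) ∉ S → ∀ i,
      (A * aeval P (u j)) i c = (A' * aeval P (v j)) i c := by
    intro j c hc i
    simpa only [Matrix.mul_apply, hu, hv] using hagree (j, c) hc i
  have h₀ : A * aeval P (u j₀) = A' * aeval P (v j₀) := by
    ext i c
    exact hblock j₀ c (hj₀ c) i
  have hu₀ : aeval P (u j₀) ≠ 0 := by
    intro h
    rw [hu, h] at hne
    exact hne rfl
  obtain ⟨g, hug, hgu⟩ := exists_aeval_inverse hirr hP hu₀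
  have hAW : A = A' * aeval P (v j₀ * g) := by
    rw [map_mul, ← mul_assoc, ← h₀, mul_assoc, hug, mul_one]
  have hW : aeval P (v j₀ * g) ≠ 0 := by
    intro h
    rw [h, mul_zero] at hAW
    rw [hAW, Matrix.rank_zero] at hA
    omega
  obtain ⟨w, hWw, hwW⟩ := exists_aeval_inverse hirr hP hW
  have hVblock : ∀ j, aeval P (v j) = aeval P (v j₀ * g) * aeval P (u j) := by
    intro j
    by_contra hcon
    have hD : aeval P (v j₀ * g * u j - v j) ≠ 0 := by
      rw [map_sub, map_mul _ (v j₀ * g)]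
      exact fun h => hcon (sub_eq_zero.1 h).symm
    obtain ⟨d, hd, -⟩ := exists_aeval_inverse hirr hP hD
    have hrank : A'.rank ≤ (A' * aeval P (v j₀ * g * u j - v j)).rank := by
      conv_lhs => rw [← mul_one A', ← hd, ← mul_assoc]
      exact Matrix.rank_mul_le_left _ _
    have hAD : A' * aeval P (v j₀ * g * u j - v j)
        = A * aeval P (u j) - A' * aeval P (v j) := by
      rw [map_sub, map_mul _ (v j₀ * g), mul_sub, ← mul_assoc, ← hAW]
    have hle := rank_le_card_of_cols_zero (A' * aeval P (v j₀ * g * u j - v j))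
      (Finset.univ.filter fun c => (j, c) ∈ S) (by
        intro c hc i
        rw [hAD, Matrix.sub_apply, hblock j c (by simpa using hc) i, sub_self])
    have hcard : (Finset.univ.filter fun c => (j, c) ∈ S).card
        ≤ (S.filter fun col => col.1 = j).card := by
      refine Finset.card_le_card_of_injOn (fun c => (j, c)) ?_ ?_
      · intro c hc
        simpa using hc
      · intro a _ b _ hab
        exact (Prod.mk.inj hab).2
    have := hSblocks j
    omega
  have hVU : V = aeval P (v j₀ * g) * U := by
    ext i ⟨j, c⟩
    rw [hv, hVblock]
    simp only [Matrix.mul_apply, hu]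
  have hUV : U = aeval P w * V := by
    rw [hVU, ← Matrix.mul_assoc, hwW, Matrix.one_mul]
  apply le_antisymm
  · rw [hUV]
    exact rowSpace_mul_le _ _
  · rw [hVU]
    exact rowSpace_mul_le _ _

end
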